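/- arXiv:0912.5004 — 2 statements merged into one kernel-verified Lean document; each statement's English description precedes it below -/
import Mathlib

section
/- Let q : ℤ^n → ℤ be an integral quadratic form which is positive definite. If x, x' ∈ ℤ^n satisfy q(x) = 1 = q(x') and abs x = abs x' (that is, |x_i| = |x'_i| for all i = 1, …, n), then x = x' or x = -x'. -/
/-!
Let `u` be the restriction of `x` to the coordinates where `x` and `x'` agree and `v` its
restriction to the others, where they differ by a sign, so that `x = u + v` and `x' = u - v`.
The parallelogram law gives `q x + q x' = 2 (q u + q v)`. If `u` and `v` were both nonzero, the
right side would be at least `4 m` for any lower bound `m` of `q` on nonzero vectors. A positive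
definite form with values in `ℤ` has the lower bound `m = 1`, and there the left side is only `2`.
-/

theorem quadraticMap_add_add_quadraticMap_sub {R M N : Type*} [CommRing R] [AddCommGroup M]
    [AddCommGroup N] [Module R M] [Module R N] (q : QuadraticMap R M N) (u v : M) :
    q (u + v) + q (u - v) = 2 • q u + 2 • q v := by
  rw [sub_eq_add_neg, QuadraticMap.map_add q u v, QuadraticMap.map_add q u (-v),
    QuadraticMap.map_neg, QuadraticMap.polar_neg_right]
  abel

theorem eq_zero_or_eq_zero_of_quadraticMap_add_lt_four_nsmul {R M N : Type*} [CommRing R]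
    [AddCommGroup M] [AddCommGroup N] [Preorder N] [AddLeftMono N] [Module R M] [Module R N]
    (q : QuadraticMap R M N) {m : N} (hm : ∀ y, y ≠ 0 → m ≤ q y) {u v : M}
    (hlt : q (u + v) + q (u - v) < 4 • m) :
    u = 0 ∨ v = 0 := by
  by_contra! ⟨hu, hv⟩
  refine hlt.not_ge ?_
  calc
    4 • m = 2 • m + 2 • m := add_nsmul m 2 2
    _ ≤ 2 • q u + 2 • q v :=
      add_le_add (nsmul_le_nsmul_right (hm u hu) 2) (nsmul_le_nsmul_right (hm v hv) 2)
    _ = q (u + v) + q (u - v) := (quadraticMap_add_add_quadraticMap_sub q u v).symm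

theorem exists_eq_add_and_eq_sub_of_forall_eq_or_eq_neg {ι : Type*} {G : ι → Type*}
    [∀ i, AddGroup (G i)] {x x' : ∀ i, G i} (h : ∀ i, x i = x' i ∨ x i = -x' i) :
    ∃ u v, x = u + v ∧ x' = u - v := by
  classical
  refine ⟨fun i ↦ if x i = x' i then x i else 0, fun i ↦ if x i = x' i then 0 else x i, ?_, ?_⟩
  · ext i
    by_cases hi : x i = x' i <;> simp [hi]
  · ext i
    by_cases hi : x i = x' i
    · simp [hi]
    · have hneg : x' i = -x i := (neg_eq_iff_eq_neg.mpr ((h i).resolve_left hi)).symm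
      simpa [hi] using hneg

theorem abs_eq_of_pos_def_quadratic_form_general {ι R N : Type*} {G : ι → Type*} [CommRing R]
    [∀ i, AddCommGroup (G i)] [∀ i, LinearOrder (G i)] [∀ i, Module R (G i)]
    [AddCommGroup N] [Preorder N] [AddLeftMono N] [Module R N]
    (q : QuadraticMap R (∀ i, G i) N) {m : N} (hm : ∀ y, y ≠ 0 → m ≤ q y)
    {x x' : ∀ i, G i} (hlt : q x + q x' < 4 • m) (habs : ∀ i, |x i| = |x' i|) :
    x = x' ∨ x = -x' := by
  obtain ⟨u, v, rfl, rfl⟩ :=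
    exists_eq_add_and_eq_sub_of_forall_eq_or_eq_neg fun i ↦ abs_eq_abs.mp (habs i)
  rcases eq_zero_or_eq_zero_of_quadraticMap_add_lt_four_nsmul q hm hlt with rfl | rfl
  · exact Or.inr (by simp)
  · exact Or.inl (by simp)

/-- Let `q : ℤ^n → ℤ` be an integral quadratic form which is positive
definite (i.e. `q x > 0` for every nonzero `x`).  If `x, x' ∈ ℤ^n` satisfy
`q x = 1 = q x'` and `|x i| = |x' i|` for all `i`, then `x = x'` or `x = -x'`. -/
theorem abs_eq_of_pos_def_quadratic_form {n : ℕ}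
    (q : QuadraticForm ℤ (Fin n → ℤ))
    (hpos : ∀ x : Fin n → ℤ, x ≠ 0 → 0 < q x)
    (x x' : Fin n → ℤ) (hx : q x = 1) (hx' : q x' = 1)
    (habs : ∀ i, |x i| = |x' i|) :
    x = x' ∨ x = -x' :=
  abs_eq_of_pos_def_quadratic_form_general q (m := 1)
    (fun y hy ↦ Order.one_le_iff_pos.mpr (hpos y hy)) (by simp [hx, hx']) habs
end

section
/- Let (𝒯, ℱ) be a torsion pair in an abelian category 𝒜 (with Ext^1 groups defined): 𝒯 and ℱ are classes of objects closed under isomorphism with Hom(T, F) = 0 for all T ∈ 𝒯, F ∈ ℱ, and every object A of 𝒜 admits a short exact sequence 0 → tA → A → A/tA → 0 with tA ∈ 𝒯 and A/tA ∈ ℱ. Let Mat Ext^1(ℱ, 𝒯) be the category whose objects are triples (F, T, ε) with F ∈ ℱ, T ∈ 𝒯 and ε ∈ Ext^1(F, T), and whose morphisms (F, T, ε) → (F', T', ε') are pairs (γ : F → F', β : T → T') such that the push-forward of ε along β equals the pull-back of ε' along γ in Ext^1(F, T'). Then the assignment sending an object A to (A/tA, tA, ε_A), where ε_A is the class of the canonical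 sequence 0 → tA → A → A/tA → 0, extends to a functor η : 𝒜 → Mat Ext^1(ℱ, 𝒯) (on a morphism α, η(α) is the pair of induced morphisms on quotients and torsion subobjects); this functor is full and dense, and its kernel is the ideal of 𝒜 generated by all morphisms from an object of ℱ to an object of 𝒯. -/
/-!
**Statement 7.**  Let `(𝒯, ℱ)` be a torsion pair in an abelian category `𝒜` (with `Ext¹`
groups defined).  Let `Mat Ext¹(ℱ, 𝒯)` be the category whose objects are triples
`(F, T, ε)` with `F ∈ ℱ`, `T ∈ 𝒯` and `ε ∈ Ext¹(F, T)`, and whose morphisms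
`(F, T, ε) → (F', T', ε')` are pairs `(γ : F → F', β : T → T')` with `β_* ε = γ^* ε'`.
Then sending `A` to `(A/tA, tA, ε_A)` extends to a functor `η : 𝒜 → Mat Ext¹(ℱ, 𝒯)`
(acting on morphisms by the induced maps); `η` is full and dense, and its kernel is the
ideal of morphisms factoring as a composite `A → F₀ → T₀ → A'` with `F₀ ∈ ℱ`, `T₀ ∈ 𝒯`.
-/

open CategoryTheory Abelian

universe w v u

variable {C : Type u} [Category.{v} C] [Abelian C] [HasExt.{w} C]

/-- An object of the matrix category `Mat Ext¹(ℱ, 𝒯)`: a triple `(F, T, ε)` with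
`F ∈ ℱ`, `T ∈ 𝒯` and `ε ∈ Ext¹(F, T)`. -/
structure MatExtObj (𝒯 ℱ : C → Prop) where
  F : C
  T : C
  hF : ℱ F
  hT : 𝒯 T
  ε : Abelian.Ext F T 1

/-- A morphism `(F, T, ε) → (F', T', ε')` in the matrix category: a pair
`(γ : F ⟶ F', β : T ⟶ T')` such that the push-forward of `ε` along `β` equals the
pull-back of `ε'` along `γ` in `Ext¹(F, T')`. -/
@[ext]
structure MatExtHom {𝒯 ℱ : C → Prop} (X Y : MatExtObj 𝒯 ℱ) where
  γ : X.F ⟶ Y.F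
  β : X.T ⟶ Y.T
  compat : X.ε.comp (Ext.mk₀ β) (add_zero 1) = (Ext.mk₀ γ).comp Y.ε (zero_add 1)

noncomputable instance {𝒯 ℱ : C → Prop} : Category (MatExtObj 𝒯 ℱ) where
  Hom X Y := MatExtHom X Y
  id X := ⟨𝟙 X.F, 𝟙 X.T, by simp⟩
  comp {X Y Z} f g := ⟨f.γ ≫ g.γ, f.β ≫ g.β, by
    calc X.ε.comp (Ext.mk₀ (f.β ≫ g.β)) (add_zero 1)
        = (X.ε.comp (Ext.mk₀ f.β) (add_zero 1)).comp (Ext.mk₀ g.β) (add_zero 1) := by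
          rw [← Ext.mk₀_comp_mk₀, Ext.comp_assoc_of_second_deg_zero]
      _ = ((Ext.mk₀ f.γ).comp Y.ε (zero_add 1)).comp (Ext.mk₀ g.β) (add_zero 1) := by
          rw [f.compat]
      _ = (Ext.mk₀ f.γ).comp (Y.ε.comp (Ext.mk₀ g.β) (add_zero 1)) (zero_add 1) := by
          exact Ext.comp_assoc_of_third_deg_zero _ _ _ _
      _ = (Ext.mk₀ f.γ).comp ((Ext.mk₀ g.γ).comp Z.ε (zero_add 1)) (zero_add 1) := by
          rw [g.compat]
      _ = (Ext.mk₀ (f.γ ≫ g.γ)).comp Z.ε (zero_add 1) := by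
          rw [Ext.mk₀_comp_mk₀_assoc]⟩
  id_comp f := by apply MatExtHom.ext <;> simp
  comp_id f := by apply MatExtHom.ext <;> simp
  assoc f g h := by apply MatExtHom.ext <;> simp

/-!
Fullness is a diagram chase in the long exact `Ext` sequences: a compatible pair `(γ, β)` lifts to
a map of middle terms, first along `β`, then corrected to match `γ`. For density, a class in
`Ext¹(F, T)` is a morphism `F ⟶ T[1]` in the derived category; completing it to a triangle gives
an object in the heart of the standard t-structure, so the class is realised by a short exact
sequence `0 → T → E → F → 0`. As `Hom(𝒯, ℱ) = 0`, this sequence is the torsion sequence of `E`.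
A map of short exact sequences whose outer components vanish factors as `A → A/tA → tA' → A'`,
which describes the kernel.
-/

section ShortExact

variable {𝒜 : Type*} [Category* 𝒜] [Preadditive 𝒜] {S₁ S₂ : ShortComplex 𝒜}

lemma shortComplexHom_ext_τ₂ [Epi S₁.g] [Mono S₂.f] {φ ψ : S₁ ⟶ S₂} (h : φ.τ₂ = ψ.τ₂) :
    φ = ψ := by
  ext
  · rw [← cancel_mono S₂.f, φ.comm₁₂, ψ.comm₁₂, h]
  · rw [h]
  · rw [← cancel_epi S₁.g, ← φ.comm₂₃, ← ψ.comm₂₃, h]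

variable [Balanced 𝒜]

/-- The morphism of short exact sequences induced by a morphism `α` between the middle terms
that carries the subobject `S₁.X₁` into the subobject `S₂.X₁`; the latter condition is stated
as the vanishing of `S₁.X₁ ⟶ S₂.X₃`. -/
noncomputable def shortExactHomOfMiddle (h₁ : S₁.ShortExact) (h₂ : S₂.ShortExact)
    (α : S₁.X₂ ⟶ S₂.X₂) (hα : S₁.f ≫ α ≫ S₂.g = 0) : S₁ ⟶ S₂ :=
  have := h₁.epi_g
  have := h₂.mono_f
  { τ₁ := h₂.exact.lift (S₁.f ≫ α) (by rw [Category.assoc, hα])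
    τ₂ := α
    τ₃ := h₁.exact.desc (α ≫ S₂.g) hα }

/-- The isomorphism of short exact sequences induced by an isomorphism between the middle terms
that identifies the subobjects `S₁.X₁` and `S₂.X₁`. -/
noncomputable def shortExactIsoOfMiddle (h₁ : S₁.ShortExact) (h₂ : S₂.ShortExact)
    (e : S₁.X₂ ≅ S₂.X₂) (he : S₁.f ≫ e.hom ≫ S₂.g = 0) (he' : S₂.f ≫ e.inv ≫ S₁.g = 0) :
    S₁ ≅ S₂ :=
  have := h₁.epi_g
  have := h₁.mono_f
  have := h₂.epi_g
  have := h₂.mono_f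
  { hom := shortExactHomOfMiddle h₁ h₂ e.hom he
    inv := shortExactHomOfMiddle h₂ h₁ e.inv he'
    hom_inv_id := shortComplexHom_ext_τ₂ e.hom_inv_id
    inv_hom_id := shortComplexHom_ext_τ₂ e.inv_hom_id }

lemma exists_τ₂_eq_of_τ₁_eq_zero_of_τ₃_eq_zero (h₁ : S₁.ShortExact) (h₂ : S₂.ShortExact)
    (φ : S₁ ⟶ S₂) (hφ₁ : φ.τ₁ = 0) (hφ₃ : φ.τ₃ = 0) :
    ∃ v : S₁.X₃ ⟶ S₂.X₁, φ.τ₂ = S₁.g ≫ v ≫ S₂.f := by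
  have := h₁.epi_g
  have := h₂.mono_f
  have hf : S₁.f ≫ φ.τ₂ = 0 := by rw [← φ.comm₁₂, hφ₁, Limits.zero_comp]
  have hg : h₁.exact.desc φ.τ₂ hf ≫ S₂.g = 0 := by
    rw [← cancel_epi S₁.g, h₁.exact.g_desc_assoc, φ.comm₂₃, hφ₃]
  exact ⟨h₂.exact.lift _ hg, by rw [h₂.exact.lift_f, h₁.exact.g_desc]⟩

end ShortExact

section ExtClass

open ShortComplex

lemma exists_f_comp_eq_of_extClass_comp_eq_zero {S : ShortComplex C} (hS : S.ShortExact) {Y : C}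
    (b : S.X₁ ⟶ Y) (hb : hS.extClass.comp (Ext.mk₀ b) (add_zero 1) = 0) :
    ∃ a : S.X₂ ⟶ Y, S.f ≫ a = b := by
  obtain ⟨x, hx⟩ := Ext.contravariant_sequence_exact₁ hS Y _ _ hb
  obtain ⟨a, rfl⟩ := (Ext.mk₀_bijective _ _).2 x
  exact ⟨a, (Ext.mk₀_bijective _ _).1 (by rw [← Ext.mk₀_comp_mk₀, hx])⟩

lemma exists_comp_g_eq_of_comp_extClass_eq_zero {S : ShortComplex C} (hS : S.ShortExact) {X : C}
    (c : X ⟶ S.X₃) (hc : (Ext.mk₀ c).comp hS.extClass (zero_add 1) = 0) :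
    ∃ a : X ⟶ S.X₂, a ≫ S.g = c := by
  obtain ⟨x, hx⟩ := Ext.covariant_sequence_exact₃ X hS _ _ hc
  obtain ⟨a, rfl⟩ := (Ext.mk₀_bijective _ _).2 x
  exact ⟨a, (Ext.mk₀_bijective _ _).1 (by rw [← Ext.mk₀_comp_mk₀, hx])⟩

lemma exists_shortComplexHom_of_extClass_compat {S₁ S₂ : ShortComplex C} (h₁ : S₁.ShortExact)
    (h₂ : S₂.ShortExact) (β : S₁.X₁ ⟶ S₂.X₁) (γ : S₁.X₃ ⟶ S₂.X₃)
    (compat : h₁.extClass.comp (Ext.mk₀ β) (add_zero 1) =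
      (Ext.mk₀ γ).comp h₂.extClass (zero_add 1)) :
    ∃ φ : S₁ ⟶ S₂, φ.τ₁ = β ∧ φ.τ₃ = γ := by
  have := h₁.epi_g
  obtain ⟨α, hα⟩ : ∃ α : S₁.X₂ ⟶ S₂.X₂, S₁.f ≫ α = β ≫ S₂.f := by
    apply exists_f_comp_eq_of_extClass_comp_eq_zero h₁
    rw [← Ext.mk₀_comp_mk₀, ← Ext.comp_assoc_of_second_deg_zero, compat,
      Ext.comp_assoc_of_third_deg_zero, h₂.extClass_comp, Ext.comp_zero]
  let γ₀ : S₁.X₃ ⟶ S₂.X₃ := h₁.exact.desc (α ≫ S₂.g) (by simp [reassoc_of% hα])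
  have hγ₀ : S₁.g ≫ γ₀ = α ≫ S₂.g := h₁.exact.g_desc _ _
  let φ₀ : S₁ ⟶ S₂ := homMk β α γ₀ hα.symm hγ₀.symm
  -- `φ₀` has the right first component; its third one is off by a map that lifts to `S₂.X₂`.
  obtain ⟨δ, hδ⟩ : ∃ δ : S₁.X₃ ⟶ S₂.X₂, δ ≫ S₂.g = γ - γ₀ := by
    apply exists_comp_g_eq_of_comp_extClass_eq_zero h₂
    have hφ₀ : h₁.extClass.comp (Ext.mk₀ β) (add_zero 1) =
        (Ext.mk₀ γ₀).comp h₂.extClass (zero_add 1) := ShortExact.extClass_naturality h₁ h₂ φ₀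
    rw [sub_eq_add_neg, Ext.mk₀_add, Ext.mk₀_neg, Ext.add_comp, Ext.neg_comp, ← compat, hφ₀,
      add_neg_cancel]
  refine ⟨homMk β (α + S₁.g ≫ δ) γ ?_ ?_, rfl, rfl⟩
  · rw [Preadditive.comp_add, S₁.zero_assoc, Limits.zero_comp, add_zero, hα]
  · rw [Preadditive.add_comp, Category.assoc, hδ, Preadditive.comp_sub, hγ₀, add_sub_cancel]

end ExtClass

section Realization

open Pretriangulated Triangulated

lemma shortExact_of_distTriang {𝒜 𝒟 : Type*} [Category* 𝒜] [Abelian 𝒜] [Category* 𝒟]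
    [Limits.HasZeroObject 𝒟] [Preadditive 𝒟] [HasShift 𝒟 ℤ]
    [∀ n : ℤ, (shiftFunctor 𝒟 n).Additive] [Pretriangulated 𝒟]
    (i : 𝒜 ⥤ 𝒟) [i.Full] [i.Faithful] [i.Additive]
    (hi : ∀ ⦃X Y : 𝒜⦄ ⦃n : ℤ⦄ (f : i.obj X ⟶ (i.obj Y)⟦n⟧), n < 0 → f = 0)
    {S : ShortComplex 𝒜} {δ : i.obj S.X₃ ⟶ (i.obj S.X₁)⟦(1 : ℤ)⟧}
    (hδ : Triangle.mk (i.map S.f) (i.map S.g) δ ∈ distTriang 𝒟) : S.ShortExact where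
  exact := S.exact_of_f_is_kernel (AbelianSubcategory.isLimitKernelForkOfDistTriang hi _ _ _ hδ)
  mono_f := Limits.mono_of_isLimit_fork
    (AbelianSubcategory.isLimitKernelForkOfDistTriang hi _ _ _ hδ)
  epi_g := Limits.epi_of_isColimit_cofork
    (AbelianSubcategory.isColimitCokernelCoforkOfDistTriang hi _ _ _ hδ)

variable {𝒜 : Type*} [Category* 𝒜] [Abelian 𝒜] [HasDerivedCategory 𝒜]

open DerivedCategory

lemma singleFunctor_hom_shift_eq_zero_of_neg ⦃X Y : 𝒜⦄ ⦃n : ℤ⦄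
    (f : (singleFunctor 𝒜 0).obj X ⟶ ((singleFunctor 𝒜 0).obj Y)⟦n⟧) (hn : n < 0) : f = 0 :=
  TStructure.t.zero_of_isLE_of_isGE f 0 (-n) (by lia) inferInstance
    (TStructure.t.isGE_shift _ 0 n (-n))

lemma singleδ_eq_of_distTriang {S : ShortComplex 𝒜} (hS : S.ShortExact)
    {δ : (singleFunctor 𝒜 0).obj S.X₃ ⟶ ((singleFunctor 𝒜 0).obj S.X₁)⟦(1 : ℤ)⟧}
    (hδ : Triangle.mk ((singleFunctor 𝒜 0).map S.f) ((singleFunctor 𝒜 0).map S.g) δ ∈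
      distTriang (DerivedCategory 𝒜)) : hS.singleδ = δ := by
  have := hS.epi_g
  obtain ⟨c, hgc, hcδ⟩ := complete_distinguished_triangle_morphism _ _
    hS.singleTriangle_distinguished hδ (𝟙 _) (𝟙 _)
    ((Category.comp_id _).trans (Category.id_comp _).symm)
  obtain ⟨c, rfl⟩ := (singleFunctor 𝒜 0).map_surjective (X := S.X₃) (Y := S.X₃) c
  obtain rfl : c = 𝟙 S.X₃ := by
    rw [← cancel_epi S.g]
    apply (singleFunctor 𝒜 0).map_injective
    rw [Functor.map_comp, Category.comp_id]
    exact hgc.trans (Category.id_comp _)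
  have hcδ' : hS.singleδ ≫ (𝟙 ((singleFunctor 𝒜 0).obj S.X₁))⟦(1 : ℤ)⟧' =
      (singleFunctor 𝒜 0).map (𝟙 S.X₃) ≫ δ := hcδ
  simpa using hcδ'

lemma exists_distTriang_singleFunctor {X Y : 𝒜}
    (δ : (singleFunctor 𝒜 0).obj Y ⟶ ((singleFunctor 𝒜 0).obj X)⟦(1 : ℤ)⟧) :
    ∃ (E : 𝒜) (f : X ⟶ E) (g : E ⟶ Y),
      Triangle.mk ((singleFunctor 𝒜 0).map f) ((singleFunctor 𝒜 0).map g) δ ∈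
        distTriang (DerivedCategory 𝒜) := by
  obtain ⟨Z, f, g, hδ⟩ := distinguished_cocone_triangle₂ δ
  have : Z.IsGE 0 := TStructure.t.isGE₂ _ hδ 0
    (inferInstanceAs (((singleFunctor 𝒜 0).obj X).IsGE 0))
    (inferInstanceAs (((singleFunctor 𝒜 0).obj Y).IsGE 0))
  have : Z.IsLE 0 := TStructure.t.isLE₂ _ hδ 0
    (inferInstanceAs (((singleFunctor 𝒜 0).obj X).IsLE 0))
    (inferInstanceAs (((singleFunctor 𝒜 0).obj Y).IsLE 0))
  obtain ⟨E, ⟨e⟩⟩ := exists_iso_singleFunctor_obj_of_isGE_of_isLE Z 0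
  refine ⟨E, (singleFunctor 𝒜 0).preimage (f ≫ e.hom), (singleFunctor 𝒜 0).preimage (e.inv ≫ g),
    isomorphic_distinguished _ hδ _ (Triangle.isoMk _ _ (Iso.refl _) e.symm (Iso.refl _) ?_ ?_ ?_)⟩
  · change (singleFunctor 𝒜 0).map _ ≫ e.inv = 𝟙 _ ≫ f
    simp
  · change (singleFunctor 𝒜 0).map _ ≫ 𝟙 _ = e.inv ≫ g
    simp
  · change δ ≫ (𝟙 ((singleFunctor 𝒜 0).obj X))⟦(1 : ℤ)⟧' = 𝟙 _ ≫ δ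
    simp

lemma exists_shortExact_extClass_eq {X Y : C} (ε : Ext Y X 1) :
    ∃ (E : C) (f : X ⟶ E) (g : E ⟶ Y) (w : f ≫ g = 0)
      (hS : (ShortComplex.mk f g w).ShortExact), hS.extClass = ε := by
  let := HasDerivedCategory.standard C
  obtain ⟨E, f, g, hε⟩ := exists_distTriang_singleFunctor ε.hom
  have w : f ≫ g = 0 := (singleFunctor C 0).map_injective (by
    simpa using! comp_distTriang_mor_zero₁₂ _ hε)
  have hS : (ShortComplex.mk f g w).ShortExact :=
    shortExact_of_distTriang _ singleFunctor_hom_shift_eq_zero_of_neg hε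
  refine ⟨E, f, g, w, hS, ?_⟩
  ext
  rw [hS.extClass_hom, singleδ_eq_of_distTriang hS hε]

end Realization

namespace MatExtObj

variable {𝒯 ℱ : C → Prop} {S₁ S₂ : ShortComplex C}

/-- The object of `Mat Ext¹(ℱ, 𝒯)` given by the outer terms and the class of a short exact
sequence `0 → T → A → F → 0` with `T ∈ 𝒯` and `F ∈ ℱ`. -/
noncomputable abbrev ofShortExact {S : ShortComplex C} (hS : S.ShortExact) (h𝒯 : 𝒯 S.X₁)
    (hℱ : ℱ S.X₃) : MatExtObj 𝒯 ℱ :=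
  ⟨S.X₃, S.X₁, hℱ, h𝒯, hS.extClass⟩

/-- The morphism of `Mat Ext¹(ℱ, 𝒯)` given by the outer components of a morphism of short exact
sequences. -/
def homOfShortExact (h₁ : S₁.ShortExact) (h₁𝒯 : 𝒯 S₁.X₁) (h₁ℱ : ℱ S₁.X₃) (h₂ : S₂.ShortExact)
    (h₂𝒯 : 𝒯 S₂.X₁) (h₂ℱ : ℱ S₂.X₃) (φ : S₁ ⟶ S₂) :
    ofShortExact h₁ h₁𝒯 h₁ℱ ⟶ ofShortExact h₂ h₂𝒯 h₂ℱ :=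
  ⟨φ.τ₃, φ.τ₁, ShortComplex.ShortExact.extClass_naturality h₁ h₂ φ⟩

/-- Isomorphic short exact sequences define isomorphic objects of `Mat Ext¹(ℱ, 𝒯)`. -/
def isoOfShortExact (h₁ : S₁.ShortExact) (h₁𝒯 : 𝒯 S₁.X₁) (h₁ℱ : ℱ S₁.X₃) (h₂ : S₂.ShortExact)
    (h₂𝒯 : 𝒯 S₂.X₁) (h₂ℱ : ℱ S₂.X₃) (e : S₁ ≅ S₂) :
    ofShortExact h₁ h₁𝒯 h₁ℱ ≅ ofShortExact h₂ h₂𝒯 h₂ℱ where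
  hom := homOfShortExact h₁ h₁𝒯 h₁ℱ h₂ h₂𝒯 h₂ℱ e.hom
  inv := homOfShortExact h₂ h₂𝒯 h₂ℱ h₁ h₁𝒯 h₁ℱ e.inv
  hom_inv_id := MatExtHom.ext (congrArg (·.τ₃) e.hom_inv_id) (congrArg (·.τ₁) e.hom_inv_id)
  inv_hom_id := MatExtHom.ext (congrArg (·.τ₃) e.inv_hom_id) (congrArg (·.τ₁) e.inv_hom_id)

end MatExtObj

/-- A torsion pair `(𝒯, ℱ)` together with a chosen short exact sequence
`0 → tA → A → A/tA → 0`, `tA ∈ 𝒯`, `A/tA ∈ ℱ`, for every object `A`. The objects `tA` and `A/tA`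
are `torsion A` and `torsionFree A`. -/
structure TorsionSequences {𝒜 : Type*} [Category* 𝒜] [Preadditive 𝒜] (𝒯 ℱ : 𝒜 → Prop) where
  torsion : 𝒜 → 𝒜
  torsionFree : 𝒜 → 𝒜
  ι (A : 𝒜) : torsion A ⟶ A
  π (A : 𝒜) : A ⟶ torsionFree A
  w (A : 𝒜) : ι A ≫ π A = 0
  shortExact (A : 𝒜) : (ShortComplex.mk (ι A) (π A) (w A)).ShortExact
  torsion_mem (A : 𝒜) : 𝒯 (torsion A)
  torsionFree_mem (A : 𝒜) : ℱ (torsionFree A)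
  hom_eq_zero (T F : 𝒜) : 𝒯 T → ℱ F → ∀ f : T ⟶ F, f = 0

namespace TorsionSequences

section

variable {𝒜 : Type*} [Category* 𝒜] [Preadditive 𝒜] [Balanced 𝒜] {𝒯 ℱ : 𝒜 → Prop}
  (t : TorsionSequences 𝒯 ℱ)

instance (A : 𝒜) : Mono (t.ι A) := (t.shortExact A).mono_f

instance (A : 𝒜) : Epi (t.π A) := (t.shortExact A).epi_g

/-- The functor sending an object to its torsion sequence. -/
noncomputable def seq : 𝒜 ⥤ ShortComplex 𝒜 where
  obj A := ShortComplex.mk (t.ι A) (t.π A) (t.w A)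
  map {A A'} α := shortExactHomOfMiddle (t.shortExact A) (t.shortExact A') α
    (t.hom_eq_zero _ _ (t.torsion_mem A) (t.torsionFree_mem A') _)
  map_id _ := shortComplexHom_ext_τ₂ rfl
  map_comp _ _ := shortComplexHom_ext_τ₂ rfl

instance (A : 𝒜) : Mono (t.seq.obj A).f := inferInstanceAs (Mono (t.ι A))

instance (A : 𝒜) : Epi (t.seq.obj A).g := inferInstanceAs (Epi (t.π A))

lemma seq_map_τ₂ {A A' : 𝒜} (φ : t.seq.obj A ⟶ t.seq.obj A') :
    t.seq.map (X := A) (Y := A') φ.τ₂ = φ :=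
  shortComplexHom_ext_τ₂ rfl

lemma seq_map_outer_eq_zero_iff {A A' : 𝒜} (α : A ⟶ A') :
    ((t.seq.map α).τ₃ = 0 ∧ (t.seq.map α).τ₁ = 0) ↔
      ∃ (F₀ T₀ : 𝒜) (_ : ℱ F₀) (_ : 𝒯 T₀) (u : A ⟶ F₀) (v : F₀ ⟶ T₀) (w : T₀ ⟶ A'),
        α = u ≫ v ≫ w := by
  constructor
  · rintro ⟨h₃, h₁⟩
    obtain ⟨v, hv⟩ := exists_τ₂_eq_of_τ₁_eq_zero_of_τ₃_eq_zero (t.shortExact A) (t.shortExact A')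
      (t.seq.map α) h₁ h₃
    exact ⟨_, _, t.torsionFree_mem A, t.torsion_mem A', t.π A, v, t.ι A', hv⟩
  · rintro ⟨F₀, T₀, hF₀, hT₀, u, v, w, rfl⟩
    have hu : t.ι A ≫ u = 0 := t.hom_eq_zero _ _ (t.torsion_mem A) hF₀ _
    have hw : w ≫ t.π A' = 0 := t.hom_eq_zero _ _ hT₀ (t.torsionFree_mem A') _
    have h₂₃ : (u ≫ v ≫ w) ≫ t.π A' = 0 := by
      rw [Category.assoc, Category.assoc, hw, Limits.comp_zero, Limits.comp_zero]
    have h₁₂ : t.ι A ≫ u ≫ v ≫ w = 0 := by rw [reassoc_of% hu, Limits.zero_comp]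
    exact ⟨Limits.zero_of_epi_comp (t.seq.obj A).g ((t.seq.map _).comm₂₃.symm.trans h₂₃),
      Limits.zero_of_comp_mono (t.seq.obj A').f ((t.seq.map _).comm₁₂.trans h₁₂)⟩

end

variable {𝒯 ℱ : C → Prop} (t : TorsionSequences 𝒯 ℱ)

/-- The functor `η : 𝒜 ⥤ Mat Ext¹(ℱ, 𝒯)`, sending `A` to `(A/tA, tA, ε_A)` where `ε_A` is the
class of the torsion sequence of `A`. -/
noncomputable def toMatExt : C ⥤ MatExtObj 𝒯 ℱ where
  obj A := .ofShortExact (t.shortExact A) (t.torsion_mem A) (t.torsionFree_mem A)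
  map {_ _} α := MatExtObj.homOfShortExact _ _ _ _ _ _ (t.seq.map α)
  map_id A := MatExtHom.ext (congrArg (·.τ₃) (t.seq.map_id A)) (congrArg (·.τ₁) (t.seq.map_id A))
  map_comp f g := MatExtHom.ext (congrArg (·.τ₃) (t.seq.map_comp f g))
    (congrArg (·.τ₁) (t.seq.map_comp f g))

instance : t.toMatExt.Full where
  map_surjective {A A'} g := by
    obtain ⟨φ, hβ, hγ⟩ := exists_shortComplexHom_of_extClass_compat (t.shortExact A)
      (t.shortExact A') g.β g.γ g.compat
    have hφ : t.seq.map φ.τ₂ = φ := t.seq_map_τ₂ φ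
    exact ⟨φ.τ₂, MatExtHom.ext ((congrArg (·.τ₃) hφ).trans hγ) ((congrArg (·.τ₁) hφ).trans hβ)⟩

instance : t.toMatExt.EssSurj where
  mem_essImage := by
    rintro ⟨F, T, hF, hT, ε⟩
    obtain ⟨E, f, g, w, hS, rfl⟩ := exists_shortExact_extClass_eq ε
    exact ⟨E, ⟨MatExtObj.isoOfShortExact _ _ _ hS hT hF
      (shortExactIsoOfMiddle (t.shortExact E) hS (Iso.refl E)
        (t.hom_eq_zero _ _ (t.torsion_mem E) hF _)
        (t.hom_eq_zero _ _ hT (t.torsionFree_mem E) _))⟩⟩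

end TorsionSequences

/-- Given a torsion pair `(𝒯, ℱ)` in an abelian category (the classes
are closed under isomorphism, `Hom(T, F) = 0` for `T ∈ 𝒯`, `F ∈ ℱ`, and every object `A`
fits in a short exact sequence `0 → tA → A → A/tA → 0` with `tA ∈ 𝒯`, `A/tA ∈ ℱ`), the
assignment `A ↦ (A/tA, tA, ε_A)` extends to a functor `η` into `Mat Ext¹(ℱ, 𝒯)` whose
action on a morphism `α` is the pair of induced morphisms on quotients and torsion
subobjects; this functor is full and dense, and a morphism `α` is killed by `η` iff it
factors as `A → F₀ → T₀ → A'` with `F₀ ∈ ℱ` and `T₀ ∈ 𝒯`. -/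
theorem matExt_functor_full_dense_ker (𝒯 ℱ : C → Prop)
    (h𝒯iso : ∀ {X Y : C}, (X ≅ Y) → 𝒯 X → 𝒯 Y)
    (hℱiso : ∀ {X Y : C}, (X ≅ Y) → ℱ X → ℱ Y)
    (hvanish : ∀ (T F : C), 𝒯 T → ℱ F → ∀ f : T ⟶ F, f = 0)
    (tT tF : C → C) (ι : ∀ A : C, tT A ⟶ A) (π : ∀ A : C, A ⟶ tF A)
    (hw : ∀ A : C, ι A ≫ π A = 0)
    (hSE : ∀ A : C, (ShortComplex.mk (ι A) (π A) (hw A)).ShortExact)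
    (h𝒯 : ∀ A : C, 𝒯 (tT A)) (hℱ : ∀ A : C, ℱ (tF A)) :
    letI obj : C → MatExtObj 𝒯 ℱ :=
      fun A => ⟨tF A, tT A, hℱ A, h𝒯 A, (hSE A).extClass⟩
    ∃ ηm : ∀ (A A' : C), (A ⟶ A') → (obj A ⟶ obj A'),
      -- `ηm` together with `obj` is a functor `η : 𝒜 ⥤ Mat Ext¹(ℱ, 𝒯)`
      (∀ A : C, ηm A A (𝟙 A) = 𝟙 (obj A)) ∧
      (∀ (A A' A'' : C) (f : A ⟶ A') (g : A' ⟶ A''),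
        ηm A A'' (f ≫ g) = ηm A A' f ≫ ηm A' A'' g) ∧
      -- on a morphism `α`, `η` is given by the induced morphisms on the torsion
      -- subobjects and on the torsion-free quotients
      (∀ (A A' : C) (α : A ⟶ A'),
        ι A ≫ α = (ηm A A' α).β ≫ ι A' ∧ α ≫ π A' = π A ≫ (ηm A A' α).γ) ∧
      -- `η` is full
      (∀ (A A' : C) (g : obj A ⟶ obj A'), ∃ α : A ⟶ A', ηm A A' α = g) ∧
      -- `η` is dense
      (∀ X : MatExtObj 𝒯 ℱ, ∃ A : C, Nonempty (obj A ≅ X)) ∧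
      -- the kernel of `η` is the ideal generated by the morphisms `ℱ → 𝒯`, i.e. it
      -- consists of the morphisms factoring as `A → F₀ → T₀ → A'` with `F₀ ∈ ℱ`, `T₀ ∈ 𝒯`
      (∀ (A A' : C) (α : A ⟶ A'),
        ((ηm A A' α).γ = 0 ∧ (ηm A A' α).β = 0) ↔
          ∃ (F₀ T₀ : C) (_ : ℱ F₀) (_ : 𝒯 T₀)
            (u : A ⟶ F₀) (v : F₀ ⟶ T₀) (w : T₀ ⟶ A'), α = u ≫ v ≫ w) := by
  let t : TorsionSequences 𝒯 ℱ := ⟨tT, tF, ι, π, hw, hSE, h𝒯, hℱ, hvanish⟩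
  exact ⟨fun _ _ α ↦ t.toMatExt.map α,
    t.toMatExt.map_id,
    fun _ _ _ f g ↦ t.toMatExt.map_comp f g,
    fun _ _ α ↦ ⟨(t.seq.map α).comm₁₂.symm, (t.seq.map α).comm₂₃⟩,
    fun _ _ g ↦ t.toMatExt.map_surjective g,
    fun X ↦ ⟨t.toMatExt.objPreimage X, ⟨t.toMatExt.objObjPreimageIso X⟩⟩,
    fun _ _ α ↦ t.seq_map_outer_eq_zero_iff α⟩
end
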